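/- arXiv:1206.4667 — 10 statements merged into one kernel-verified Lean document; each statement's English description precedes it below -/
import Mathlib

section
/- Let pos and neg be natural numbers with pos > 0, and let n = pos + neg and skew π = pos / n. For any valid confusion matrix (tp, fp, fn, tn) for this data set with tp + fp > 0, the precision p = tp / (tp + fp) and recall r = tp / pos satisfy p ≥ π·r / (1 − π + π·r). -/
/-- Any valid confusion matrix (tp+fn = pos, fp+tn = neg) with tp+fp > 0
satisfies precision ≥ π·r / (1 − π + π·r) where π = pos/n and r = tp/pos. -/
theorem precision_lower_bound
    (pos neg : ℕ) (hpos : 0 < pos)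
    (tp fp fn tn : ℕ)
    (htp : tp + fn = pos) (hfp : fp + tn = neg)
    (hpred : 0 < tp + fp) :
    let n : ℝ := (pos : ℝ) + (neg : ℝ)
    let π : ℝ := (pos : ℝ) / n
    let p : ℝ := (tp : ℝ) / ((tp : ℝ) + (fp : ℝ))
    let r : ℝ := (tp : ℝ) / (pos : ℝ)
    p ≥ π * r / (1 - π + π * r) := by
  intro n π p r
  have hP : (0 : ℝ) < pos := by exact_mod_cast hpos
  have hN : (0 : ℝ) ≤ neg := Nat.cast_nonneg _
  have hT : (0 : ℝ) ≤ tp := Nat.cast_nonneg _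
  have hD : (0 : ℝ) < (tp : ℝ) + fp := by exact_mod_cast hpred
  have hF : (fp : ℝ) ≤ neg := by
    have h : fp ≤ neg := by omega
    exact_mod_cast h
  have hn : (0 : ℝ) < n := by
    show (0 : ℝ) < (pos : ℝ) + neg
    linarith
  have h1 : π * r = tp / n := by
    show (pos : ℝ) / n * (tp / pos) = tp / n
    field_simp
  have h2 : 1 - π + π * r = ((tp : ℝ) + neg) / n := by
    rw [h1]
    show 1 - (pos : ℝ) / n + tp / n = _
    have hn' : n = (pos : ℝ) + neg := rfl
    rw [eq_div_iff hn.ne', add_mul, sub_mul, div_mul_cancel₀ _ hn.ne',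
      div_mul_cancel₀ _ hn.ne', hn']
    ring
  rw [h2, h1, div_div_div_cancel_right₀ hn.ne']
  exact div_le_div_of_nonneg_left hT hD (by linarith)
end

section
/- Let pos and neg be positive real numbers, n = pos + neg, and skew π = pos / n. For any real numbers r ∈ (0, 1] and p ∈ (0, 1] satisfying p ≥ π·r / (1 − π + π·r), there exist nonnegative real numbers tp, fp, fn, tn with tp + fn = pos, fp + tn = neg, tp / pos = r, and tp / (tp + fp) = p. That is, every point of PR space on or above the minimum precision curve is achievable by a valid (fractional) confusion matrix. -/
/-- Every PR-space point (r, p) with r, p ∈ (0,1] on or above the minimum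
precision curve is achievable by a valid fractional confusion matrix. -/
theorem achievable_of_above_min_curve
    (pos neg : ℝ) (hpos : 0 < pos) (hneg : 0 < neg)
    (r p : ℝ) (hr0 : 0 < r) (hr1 : r ≤ 1) (hp0 : 0 < p) (hp1 : p ≤ 1)
    (hbound : p ≥ (pos / (pos + neg)) * r /
      (1 - pos / (pos + neg) + (pos / (pos + neg)) * r)) :
    ∃ tp fp fn tn : ℝ,
      0 ≤ tp ∧ 0 ≤ fp ∧ 0 ≤ fn ∧ 0 ≤ tn ∧
      tp + fn = pos ∧ fp + tn = neg ∧
      tp / pos = r ∧ tp / (tp + fp) = p := by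
  have hs : 0 < pos + neg := by positivity
  have hd : 0 < neg + pos * r := by positivity
  have e : (pos / (pos + neg)) * r /
      (1 - pos / (pos + neg) + (pos / (pos + neg)) * r) = pos * r / (neg + pos * r) := by
    have h1 : 1 - pos / (pos + neg) + (pos / (pos + neg)) * r
        = (neg + pos * r) / (pos + neg) := by
      field_simp
      ring
    rw [h1]
    field_simp
  rw [e, ge_iff_le, div_le_iff₀ hd] at hbound
  have hle : pos * r / p ≤ neg + pos * r := by
    rw [div_le_iff₀ hp0]
    linarith
  have hge : pos * r ≤ pos * r / p := by
    rw [le_div_iff₀ hp0]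
    have : 0 < pos * r := by positivity
    nlinarith
  refine ⟨pos * r, pos * r / p - pos * r, pos - pos * r, neg - (pos * r / p - pos * r),
    by positivity, by linarith, by nlinarith, by linarith, by ring, by ring, ?_, ?_⟩
  · field_simp
  · rw [add_sub_cancel]
    field_simp
end

section
/- Let pos and neg be positive real numbers, n = pos + neg, and skew π = pos / n. For any real number p with 0 < p < π, the PR-space point with recall r = 1 and precision p is not achievable: there is no tuple of nonnegative real numbers (tp, fp, fn, tn) with tp + fn = pos, fp + tn = neg, tp / pos = 1, and tp / (tp + fp) = p. In particular, for every π ∈ (0,1) there exist unachievable points in PR space. -/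
/-- For 0 < p < π, the PR-space point with recall 1 and precision p is not
achievable by any valid fractional confusion matrix. -/
theorem unachievable_point_exists
    (pos neg : ℝ) (hpos : 0 < pos) (hneg : 0 < neg)
    (p : ℝ) (hp0 : 0 < p) (hpπ : p < pos / (pos + neg)) :
    ¬ ∃ tp fp fn tn : ℝ,
        0 ≤ tp ∧ 0 ≤ fp ∧ 0 ≤ fn ∧ 0 ≤ tn ∧
        tp + fn = pos ∧ fp + tn = neg ∧
        tp / pos = 1 ∧ tp / (tp + fp) = p := by
  rintro ⟨tp, fp, fn, tn, h1, h2, h3, h4, h5, h6, h7, h8⟩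
  have htp : tp = pos := by
    rw [div_eq_one_iff_eq hpos.ne'] at h7
    exact h7
  subst htp
  have hle : tp / (tp + neg) ≤ tp / (tp + fp) :=
    div_le_div_of_nonneg_left hpos.le (by linarith) (by linarith)
  linarith
end

section
/- For any real number π with 0 < π < 1, the area of the unachievable region in PR space equals 1 + (1 − π)·ln(1 − π) / π; that is, ∫₀¹ π·r / (1 − π + π·r) dr = 1 + (1 − π)·ln(1 − π) / π. -/
/-- The area of the unachievable region in PR space:
∫₀¹ π·r/(1−π+π·r) dr = 1 + (1−π)·ln(1−π)/π. -/
theorem aucpr_min_eq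
    (π : ℝ) (h0 : 0 < π) (h1 : π < 1) :
    ∫ r in (0:ℝ)..1, π * r / (1 - π + π * r)
      = 1 + (1 - π) * Real.log (1 - π) / π := by
  have hpos : ∀ r ∈ Set.uIcc (0:ℝ) 1, 1 - π + π * r ≠ 0 := by
    intro r hr
    rw [Set.uIcc_of_le zero_le_one] at hr
    have := mul_nonneg h0.le hr.1
    linarith
  have hd : ∀ r ∈ Set.uIcc (0:ℝ) 1,
      HasDerivAt (fun r : ℝ => r - (1 - π) / π * Real.log (1 - π + π * r))
        (π * r / (1 - π + π * r)) r := by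
    intro r hr
    have hne := hpos r hr
    have h2 : HasDerivAt (fun r : ℝ => 1 - π + π * r) (π * 1) r :=
      ((hasDerivAt_id' r).const_mul π).const_add (1 - π)
    have h3 := (hasDerivAt_id' r).sub ((h2.log hne).const_mul ((1 - π) / π))
    refine h3.congr_deriv ?_
    have hp := h0.ne'
    rw [mul_one, div_mul_div_comm, mul_comm π (1 - π + π * r),
      mul_div_mul_right _ _ hp, eq_div_iff hne, sub_mul, div_mul_cancel₀ _ hne]
    ring
  have hc : ContinuousOn (fun r : ℝ => π * r / (1 - π + π * r)) (Set.uIcc (0:ℝ) 1) :=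
    ContinuousOn.div (by fun_prop) (by fun_prop) hpos
  rw [intervalIntegral.integral_eq_sub_of_hasDerivAt hd hc.intervalIntegrable]
  simp
  ring
end

section
/- For any real numbers π, a, b with 0 < π < 1 and 0 ≤ a < b ≤ 1, the area of the unachievable region over recalls restricted to [a, b] equals b − a + ((1 − π)/π) · ln( (π·(a − 1) + 1) / (π·(b − 1) + 1) ); that is, ∫_a^b π·r / (1 − π + π·r) dr = b − a + ((1 − π)/π) · ln( (π·(a − 1) + 1) / (π·(b − 1) + 1) ). -/
/-- Minimum AUCPR over recalls restricted to [a, b]: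
∫_a^b π·r/(1−π+π·r) dr = b − a + ((1−π)/π)·ln((π(a−1)+1)/(π(b−1)+1)). -/
theorem aucpr_min_restricted_eq
    (π a b : ℝ) (h0 : 0 < π) (h1 : π < 1)
    (ha : 0 ≤ a) (hab : a < b) (hb : b ≤ 1) :
    ∫ r in a..b, π * r / (1 - π + π * r)
      = b - a + ((1 - π) / π) * Real.log ((π * (a - 1) + 1) / (π * (b - 1) + 1)) := by
  have hpos : ∀ r : ℝ, 0 ≤ r → 0 < 1 - π + π * r := fun r hr => by
    have := mul_nonneg h0.le hr
    linarith
  have hu : ∀ r ∈ Set.uIcc a b, 0 < 1 - π + π * r := fun r hr => by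
    rw [Set.uIcc_of_le hab.le] at hr
    exact hpos r (ha.trans hr.1)
  have hd : ∀ r ∈ Set.uIcc a b,
      HasDerivAt (fun r : ℝ => r - (1 - π) / π * Real.log (1 - π + π * r))
        (π * r / (1 - π + π * r)) r := fun r hr => by
    have hp := hu r hr
    have h2 : HasDerivAt (fun r : ℝ => 1 - π + π * r) (π * 1) r :=
      ((hasDerivAt_id r).const_mul π).const_add (1 - π)
    have h3 := (hasDerivAt_id r).sub ((h2.log hp.ne').const_mul ((1 - π) / π))
    have hp' := hp.ne'
    have e : 1 - (1 - π) / π * (π * 1 / (1 - π + π * r)) = π * r / (1 - π + π * r) := by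
      field_simp
      ring
    rw [← e]
    exact h3
  have hc : ContinuousOn (fun r : ℝ => π * r / (1 - π + π * r)) (Set.uIcc a b) := by
    apply ContinuousOn.div (by fun_prop) (by fun_prop)
    intro r hr
    exact (hu r hr).ne'
  rw [intervalIntegral.integral_eq_sub_of_hasDerivAt hd hc.intervalIntegrable]
  have ea : π * (a - 1) + 1 = 1 - π + π * a := by ring
  have eb : π * (b - 1) + 1 = 1 - π + π * b := by ring
  rw [ea, eb, Real.log_div (hpos a ha).ne' (hpos b (ha.trans hab.le)).ne']
  ring
end

section
/- For every real number π with 0 < π < 1, the minimum AUCPR satisfies 0 < 1 + (1 − π)·ln(1 − π) / π < 1. -/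
/-- For every skew π ∈ (0,1), the minimum AUCPR lies strictly between 0 and 1. -/
theorem aucpr_min_mem_Ioo
    (π : ℝ) (h0 : 0 < π) (h1 : π < 1) :
    0 < 1 + (1 - π) * Real.log (1 - π) / π ∧
    1 + (1 - π) * Real.log (1 - π) / π < 1 := by
  have hx : 0 < 1 - π := by linarith
  have hlog : Real.log (1 - π) < 0 := Real.log_neg hx (by linarith)
  have hne : (1 - π)⁻¹ ≠ 1 := by
    intro h
    rw [inv_eq_one] at h
    linarith
  have h := Real.log_lt_sub_one_of_pos (inv_pos.mpr hx) hne
  rw [Real.log_inv] at h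
  have h2 := mul_lt_mul_of_pos_left h hx
  rw [mul_sub, mul_inv_cancel₀ hx.ne'] at h2
  constructor
  · have : -1 < (1 - π) * Real.log (1 - π) / π := by
      rw [lt_div_iff₀ h0]
      linarith
    linarith
  · have : (1 - π) * Real.log (1 - π) / π < 0 :=
      div_neg_of_neg_of_pos (mul_neg_of_pos_of_neg hx hlog) h0
    linarith
end

section
/- The minimum AUCPR is strictly increasing in the skew: the function π ↦ 1 + (1 − π)·ln(1 − π) / π is strictly monotonically increasing on the interval (0, 1). -/
/-- The minimum AUCPR is strictly increasing in the skew on (0, 1). -/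
theorem aucpr_min_strictMonoOn :
    StrictMonoOn (fun π : ℝ => 1 + (1 - π) * Real.log (1 - π) / π)
      (Set.Ioo 0 1) := by
  have hd : ∀ x ∈ Set.Ioo (0:ℝ) 1,
      HasDerivAt (fun π : ℝ => 1 + (1 - π) * Real.log (1 - π) / π)
        ((-x - Real.log (1 - x)) / x ^ 2) x := by
    intro x hx
    have h0 : x ≠ 0 := hx.1.ne'
    have h1 : 1 - x ≠ 0 := (sub_pos.2 hx.2).ne'
    have ha : HasDerivAt (fun π : ℝ => 1 - π) (-1) x := (hasDerivAt_id x).const_sub 1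
    have h := ((ha.mul (ha.log h1)).div (hasDerivAt_id x) h0).const_add 1
    refine h.congr_deriv ?_
    simp only [id, Pi.mul_apply]
    field_simp
    ring
  refine strictMonoOn_of_deriv_pos (convex_Ioo 0 1)
    (fun x hx => (hd x hx).continuousAt.continuousWithinAt) ?_
  intro x hx
  rw [interior_Ioo] at hx
  rw [(hd x hx).deriv]
  have h := Real.log_lt_sub_one_of_pos (sub_pos.2 hx.2) (by linarith [hx.1])
  exact div_pos (by linarith) (pow_pos hx.1 2)
end

section
/- Fix a real number π with 0 < π < 1. There is no function f' : [0,1] × [0,1] → ℝ satisfying all three of the following: (1) f'(r, π·r / (1 − π + π·r)) = 0 for all r ∈ [0,1]; (2) for every fixed p ∈ [0,1], f'(r₁, p) < f'(r₂, p) if and only if r₁ < r₂; (3) for every fixed r ∈ [0,1], f'(r, p₁) < f'(r, p₂) if and only if p₁ < p₂. -/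
/-- There is no modified F1 score on [0,1] × [0,1] that vanishes on the minimum
precision curve and is strictly increasing in recall and in precision. -/
theorem no_modified_f1
    (π : ℝ) (h0 : 0 < π) (h1 : π < 1) :
    ¬ ∃ f' : ℝ → ℝ → ℝ,
        (∀ r ∈ Set.Icc (0:ℝ) 1, f' r (π * r / (1 - π + π * r)) = 0) ∧
        (∀ p ∈ Set.Icc (0:ℝ) 1, ∀ r₁ ∈ Set.Icc (0:ℝ) 1, ∀ r₂ ∈ Set.Icc (0:ℝ) 1,
          (f' r₁ p < f' r₂ p ↔ r₁ < r₂)) ∧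
        (∀ r ∈ Set.Icc (0:ℝ) 1, ∀ p₁ ∈ Set.Icc (0:ℝ) 1, ∀ p₂ ∈ Set.Icc (0:ℝ) 1,
          (f' r p₁ < f' r p₂ ↔ p₁ < p₂)) := by
  rintro ⟨f, hz, hr, hp⟩
  have a := hz 0 (by norm_num)
  have b := hz 1 (by norm_num)
  have c := (hr 0 (by norm_num) 0 (by norm_num) 1 (by norm_num)).2 one_pos
  have d := (hp 1 (by norm_num) 0 (by norm_num) π ⟨h0.le, h1.le⟩).2 h0
  have e : π * 1 / (1 - π + π * 1) = π := by
    rw [show 1 - π + π * 1 = 1 by ring]; ring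
  rw [e] at b
  rw [mul_zero, zero_div] at a
  linarith
end

section
/- Fix a real number π with 0 < π < 1, and let f' : [0,1] × [0,1] → ℝ be a function such that f'(r, π·r / (1 − π + π·r)) = 0 for all r ∈ [0,1], f' is nondecreasing in its first argument for every fixed value of the second, and f' is nondecreasing in its second argument for every fixed value of the first. Then f'(r, p) = 0 for every (r, p) ∈ [0,1] × [0,1] with π·r / (1 − π + π·r) ≤ p ≤ π. -/
/-- If a modified F1 score vanishes on the minimum precision curve and is
nondecreasing in each argument, then it vanishes at every point (r, p) of
[0,1] × [0,1] with π·r/(1−π+π·r) ≤ p ≤ π. -/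
theorem modified_f1_vanishes_below_random
    (π : ℝ) (h0 : 0 < π) (h1 : π < 1) (f' : ℝ → ℝ → ℝ)
    (hcurve : ∀ r ∈ Set.Icc (0:ℝ) 1, f' r (π * r / (1 - π + π * r)) = 0)
    (hmono_r : ∀ p ∈ Set.Icc (0:ℝ) 1, ∀ r₁ ∈ Set.Icc (0:ℝ) 1, ∀ r₂ ∈ Set.Icc (0:ℝ) 1,
      r₁ ≤ r₂ → f' r₁ p ≤ f' r₂ p)
    (hmono_p : ∀ r ∈ Set.Icc (0:ℝ) 1, ∀ p₁ ∈ Set.Icc (0:ℝ) 1, ∀ p₂ ∈ Set.Icc (0:ℝ) 1,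
      p₁ ≤ p₂ → f' r p₁ ≤ f' r p₂) :
    ∀ r ∈ Set.Icc (0:ℝ) 1, ∀ p ∈ Set.Icc (0:ℝ) 1,
      π * r / (1 - π + π * r) ≤ p → p ≤ π → f' r p = 0 := by
  intro r hr p hp hle hpπ
  obtain ⟨hr0, hr1⟩ := hr
  have hone : (1:ℝ) ∈ Set.Icc (0:ℝ) 1 := ⟨zero_le_one, le_refl 1⟩
  have hnn : 0 ≤ π * r := mul_nonneg h0.le hr0
  have hden : 0 < 1 - π + π * r := by linarith
  have hq : π * r / (1 - π + π * r) ∈ Set.Icc (0:ℝ) 1 :=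
    ⟨div_nonneg hnn hden.le, hle.trans hp.2⟩
  apply le_antisymm
  · have h2 := hmono_r p hp r ⟨hr0, hr1⟩ 1 hone hr1
    have h3 := hmono_p 1 hone p hp π ⟨h0.le, h1.le⟩ hpπ
    have h4 := hcurve 1 hone
    have h5 : π * 1 / (1 - π + π * 1) = π := by
      rw [mul_one, sub_add_cancel, div_one]
    rw [h5] at h4
    linarith
  · have h2 := hmono_p r ⟨hr0, hr1⟩ _ hq p hp hle
    rw [hcurve r ⟨hr0, hr1⟩] at h2
    exact h2
end

section
/- Fix a real number π with 0 < π < 1, and define f' : [0,1] × [0,1] → ℝ by f'(r, p) = 0 if p ≤ π, and f'(r, p) = 2·r·q / (r + q) with q = (p − π)/(1 − π) if p > π (the harmonic mean of the recall r and the precision normalized to random guessing). Then f' vanishes on the minimum precision curve, i.e. f'(r, π·r / (1 − π + π·r)) = 0 for all r ∈ [0,1], and f' is nondecreasing in its first argument for every fixed value of the second and nondecreasing in its second argument for every fixed value of the first. -/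
/-- The modified F1 score that is 0 for p ≤ π and otherwise the harmonic mean
of r and the normalized precision (p−π)/(1−π) vanishes on the minimum
precision curve and is nondecreasing in each argument on [0,1] × [0,1]. -/
theorem modified_f1_construction
    (π : ℝ) (h0 : 0 < π) (h1 : π < 1) (f' : ℝ → ℝ → ℝ)
    (hf : ∀ r p : ℝ, f' r p =
      if p ≤ π then 0
      else 2 * r * ((p - π) / (1 - π)) / (r + (p - π) / (1 - π))) :
    (∀ r ∈ Set.Icc (0:ℝ) 1, f' r (π * r / (1 - π + π * r)) = 0) ∧
    (∀ p ∈ Set.Icc (0:ℝ) 1, ∀ r₁ ∈ Set.Icc (0:ℝ) 1, ∀ r₂ ∈ Set.Icc (0:ℝ) 1,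
      r₁ ≤ r₂ → f' r₁ p ≤ f' r₂ p) ∧
    (∀ r ∈ Set.Icc (0:ℝ) 1, ∀ p₁ ∈ Set.Icc (0:ℝ) 1, ∀ p₂ ∈ Set.Icc (0:ℝ) 1,
      p₁ ≤ p₂ → f' r p₁ ≤ f' r p₂) := by
  have hd : 0 < 1 - π := by linarith
  refine ⟨?_, ?_, ?_⟩
  · rintro r ⟨hr0, hr1⟩
    have hpr : 0 ≤ π * r := by positivity
    have h : π * r / (1 - π + π * r) ≤ π := by
      rw [div_le_iff₀ (by linarith)]
      apply mul_le_mul_of_nonneg_left _ h0.le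
      nlinarith
    rw [hf, if_pos h]
  · rintro p - r₁ ⟨hr₁, -⟩ r₂ ⟨hr₂, -⟩ h
    rw [hf, hf]
    split_ifs with hp
    · exact le_rfl
    · have hq : 0 < (p - π) / (1 - π) := div_pos (by linarith) hd
      generalize (p - π) / (1 - π) = q at hq
      rw [div_le_div_iff₀ (by linarith) (by linarith)]
      have := mul_le_mul_of_nonneg_right h (mul_pos hq hq).le
      nlinarith
  · rintro r ⟨hr, -⟩ p₁ - p₂ - h
    rw [hf, hf]
    split_ifs with hp₁ hp₂ hp₂
    · exact le_rfl
    · have hq : 0 < (p₂ - π) / (1 - π) := div_pos (by linarith) hd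
      positivity
    · linarith
    · have hq₁ : 0 < (p₁ - π) / (1 - π) := div_pos (by linarith) hd
      have hq : (p₁ - π) / (1 - π) ≤ (p₂ - π) / (1 - π) := 
        div_le_div_of_nonneg_right (by linarith) hd.le
      generalize (p₁ - π) / (1 - π) = a at *
      generalize (p₂ - π) / (1 - π) = b at *
      rw [div_le_div_iff₀ (by linarith) (by linarith)]
      have := mul_le_mul_of_nonneg_right hq (mul_nonneg hr hr)
      nlinarith
end
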